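/- arXiv:1503.03279 — 3 statements merged into one kernel-verified Lean document; each statement's English description precedes it below -/
import Mathlib

section
/- For every integer k, the identity 2k·a_0·\overline{t^{k-1}u\,dt} = −∑_{j=1}^{n} (3j + 2k)·a_j·\overline{t^{k+j-1}u\,dt} holds in Ω¹_R/dR. -/
open Polynomial LaurentPolynomial

noncomputable section

variable (n : ℕ) (a : ℕ → ℂ)

/-- The polynomial `p(t) = aₙtⁿ + ... + a₁t + a₀`. -/
def pPoly : Polynomial ℂ := ∑ i ∈ Finset.range (n + 1), Polynomial.C (a i) * Polynomial.X ^ i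

/-- The hyperelliptic ring `R = ℂ[t,t⁻¹][u]/(u² - p(t))`. -/
abbrev HyperRing : Type :=
  AdjoinRoot ((Polynomial.X : Polynomial (LaurentPolynomial ℂ)) ^ 2 -
    Polynomial.C ((pPoly n a).toLaurent))

/-- The element `tⁱ` of `R`, for `i : ℤ`. -/
abbrev tpow (i : ℤ) : HyperRing n a :=
  algebraMap (LaurentPolynomial ℂ) (HyperRing n a) (LaurentPolynomial.T i)

/-- The element `u` of `R`. -/
abbrev uElt : HyperRing n a := AdjoinRoot.root _

/-- The subspace `dR` of exact differentials inside the Kähler differentials `Ω¹_R`. -/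
abbrev dR : Submodule ℂ (Ω[HyperRing n a⁄ℂ]) :=
  LinearMap.range (KaehlerDifferential.D ℂ (HyperRing n a)).toLinearMap

/-- The quotient `Ω¹_R/dR`. -/
abbrev OmegaQ := Ω[HyperRing n a⁄ℂ] ⧸ dR n a

/-- The class of a Kähler differential in `Ω¹_R/dR`. -/
abbrev cl (ω : Ω[HyperRing n a⁄ℂ]) : OmegaQ n a := Submodule.Quotient.mk ω

/-- The class `\overline{f dg}` in `Ω¹_R/dR`. -/
abbrev fdg (f g : HyperRing n a) : OmegaQ n a :=
  cl n a (f • KaehlerDifferential.D ℂ (HyperRing n a) g)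

/-- `ω₀ = class of t⁻¹ dt`. -/
abbrev ω0 : OmegaQ n a := fdg n a (tpow n a (-1)) (tpow n a 1)

/-- `ω_k = class of t⁻ᵏ u dt`. -/
abbrev ωk (k : ℕ) : OmegaQ n a := fdg n a (tpow n a (-(k : ℤ)) * uElt n a) (tpow n a 1)

/-! The relation is the class of the exact differential `d(2tᵏu³)`. Since `u² = p`,
`d(2tᵏu³) = 2u³ d(tᵏ) + 3tᵏu d(u²) = u (2p d(tᵏ) + 3tᵏ dp)`, and the monomial `aⱼtʲ` of `p`
contributes `(3j + 2k) aⱼ tᵏ⁺ʲ⁻¹u dt`. -/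

section Laurent

variable (S : Type*) [CommSemiring S]

/-- The variable of `S[T;T⁻¹]` as a unit, so that `T k` is its `k`-th integer power. -/
def laurentTUnit : S[T;T⁻¹]ˣ where
  val := T 1
  inv := T (-1)
  val_inv := by rw [← T_add, add_neg_cancel, T_zero]
  inv_val := by rw [← T_add, neg_add_cancel, T_zero]

theorem coe_laurentTUnit_zpow (k : ℤ) : (↑(laurentTUnit S ^ k) : S[T;T⁻¹]) = T k := by
  cases k with
  | ofNat m => simp [laurentTUnit, T_pow]
  | negSucc m =>
    rw [zpow_negSucc, ← inv_pow, Units.val_pow_eq_pow_val]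
    simp [laurentTUnit, T_pow, Int.negSucc_eq]

end Laurent

section HyperRing

theorem adjoinRoot_root_X_pow_sub_C_pow {S : Type*} [CommRing S] (m : ℕ) (c : S) :
    AdjoinRoot.root (X ^ m - Polynomial.C c) ^ m = AdjoinRoot.of (X ^ m - Polynomial.C c) c := by
  rw [← sub_eq_zero, ← AdjoinRoot.eval₂_root, eval₂_sub, Polynomial.eval₂_C, eval₂_pow, eval₂_X]

theorem toLaurent_pPoly :
    (pPoly n a).toLaurent = ∑ i ∈ Finset.range (n + 1), a i • (T 1 : ℂ[T;T⁻¹]) ^ i := by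
  simp [pPoly, T_pow, LaurentPolynomial.smul_eq_C_mul]

/-- The coordinate `t` of the hyperelliptic ring as a unit; its integer powers are the `tpow`. -/
def tUnit : (HyperRing n a)ˣ :=
  Units.map (algebraMap ℂ[T;T⁻¹] (HyperRing n a)) (laurentTUnit ℂ)

theorem coe_tUnit : (tUnit n a : HyperRing n a) = tpow n a 1 := rfl

theorem coe_tUnit_zpow (k : ℤ) : (↑(tUnit n a ^ k) : HyperRing n a) = tpow n a k := by
  rw [tUnit, ← map_zpow, Units.coe_map, coe_laurentTUnit_zpow, MonoidHom.coe_coe]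

theorem uElt_sq :
    uElt n a ^ 2 = ∑ i ∈ Finset.range (n + 1), a i • (tUnit n a : HyperRing n a) ^ i :=
  calc
    uElt n a ^ 2 = algebraMap ℂ[T;T⁻¹] (HyperRing n a) (pPoly n a).toLaurent :=
      adjoinRoot_root_X_pow_sub_C_pow 2 _
    _ = algebraMap ℂ[T;T⁻¹] (HyperRing n a)
        (∑ i ∈ Finset.range (n + 1), a i • (T 1 : ℂ[T;T⁻¹]) ^ i) :=
      congrArg _ (toLaurent_pPoly n a)
    _ = ∑ i ∈ Finset.range (n + 1), a i • (tUnit n a : HyperRing n a) ^ i := by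
      simp only [map_sum, algebraMap.coe_smul, map_pow, coe_tUnit]

end HyperRing

section Derivation

variable {R A M : Type*} [CommRing R] [CommRing A] [Algebra R A] [AddCommGroup M] [Module A M]
  [Module R M] (D : Derivation R A M)

/-- The logarithmic derivative `x ↦ x⁻¹ • D x` of a derivation `D`, as a homomorphism from the
unit group, written additively, to the module in which `D` takes its values. -/
def unitsLogDeriv : Additive Aˣ →+ M where
  toFun x := (↑x.toMul⁻¹ : A) • D x.toMul
  map_zero' := by simp
  map_add' x y := by
    have hx : (↑x.toMul⁻¹ : A) * ↑y.toMul⁻¹ * x.toMul = ↑y.toMul⁻¹ := by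
      rw [mul_right_comm, Units.inv_mul, one_mul]
    have hy : (↑x.toMul⁻¹ : A) * ↑y.toMul⁻¹ * y.toMul = ↑x.toMul⁻¹ :=
      Units.inv_mul_cancel_right _ _
    rw [toMul_add, mul_inv, Units.val_mul, Units.val_mul, Derivation.leibniz, smul_add, smul_smul,
      smul_smul, hx, hy, add_comm]

theorem derivation_eq_smul_unitsLogDeriv (x : Aˣ) :
    D x = (x : A) • unitsLogDeriv D (.ofMul x) := by
  simp [unitsLogDeriv, smul_smul]

theorem derivation_units_zpow (t : Aˣ) (k : ℤ) :
    D ↑(t ^ k) = k • (↑(t ^ (k - 1)) : A) • D t := by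
  rw [derivation_eq_smul_unitsLogDeriv D (t ^ k), derivation_eq_smul_unitsLogDeriv D t, ofMul_zpow,
    map_zsmul, smul_smul, ← Units.val_mul, ← zpow_add_one, sub_add_cancel, smul_comm]

theorem two_smul_add_three_smul_derivation_units_zpow (t : Aˣ) (j k : ℤ) :
    (2 * (↑(t ^ j) : A)) • D ↑(t ^ k) + (3 * (↑(t ^ k) : A)) • D ↑(t ^ j) =
      (3 * j + 2 * k) • (↑(t ^ (k + j - 1)) : A) • D t := by
  have hj : (↑(t ^ j) * ↑(t ^ (k - 1)) : A) = ↑(t ^ (k + j - 1)) := by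
    rw [← Units.val_mul, ← zpow_add]; ring_nf
  have hk : (↑(t ^ k) * ↑(t ^ (j - 1)) : A) = ↑(t ^ (k + j - 1)) := by
    rw [← Units.val_mul, ← zpow_add]; ring_nf
  calc
    _ = (2 * k) • (↑(t ^ j) * ↑(t ^ (k - 1)) : A) • D t +
        (3 * j) • (↑(t ^ k) * ↑(t ^ (j - 1)) : A) • D t := by
      rw [derivation_units_zpow D t k, derivation_units_zpow D t j]
      module
    _ = (3 * j + 2 * k) • (↑(t ^ (k + j - 1)) : A) • D t := by
      rw [hj, hk, ← add_smul, add_comm]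

theorem two_nsmul_derivation_mul_cube (f u : A) :
    2 • D (f * u ^ 3) = u • ((2 * u ^ 2) • D f + (3 * f) • D (u ^ 2)) := by
  simp only [Derivation.leibniz, Derivation.leibniz_pow]
  module

variable [IsScalarTower R A M]

theorem two_nsmul_derivation_zpow_mul_cube {ι : Type*} (s : Finset ι) (e : ι → ℤ) (b : ι → R)
    (t : Aˣ) (u : A) (hu : u ^ 2 = ∑ i ∈ s, b i • (↑(t ^ e i) : A)) (k : ℤ) :
    2 • D (↑(t ^ k) * u ^ 3) =
      ∑ i ∈ s, (((3 * e i + 2 * k : ℤ) : R) * b i) • (↑(t ^ (k + e i - 1)) * u) • D t := by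
  rw [two_nsmul_derivation_mul_cube, hu, map_sum, Finset.mul_sum, Finset.sum_smul,
    Finset.smul_sum, ← Finset.sum_add_distrib, Finset.smul_sum]
  refine Finset.sum_congr rfl fun i _ => ?_
  calc
    u • ((2 * b i • (↑(t ^ e i) : A)) • D ↑(t ^ k) +
        (3 * (↑(t ^ k) : A)) • D (b i • (↑(t ^ e i) : A))) =
        b i • u • ((2 * (↑(t ^ e i) : A)) • D ↑(t ^ k) +
          (3 * (↑(t ^ k) : A)) • D ↑(t ^ e i)) := by
      rw [D.map_smul, mul_smul_comm, smul_assoc, smul_comm _ (b i) (D _), ← smul_add,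
        smul_comm u (b i)]
    _ = (((3 * e i + 2 * k : ℤ) : R) * b i) • (↑(t ^ (k + e i - 1)) * u) • D t := by
      rw [two_smul_add_three_smul_derivation_units_zpow, ← Int.cast_smul_eq_zsmul R]
      module

theorem statement2_general (n : ℕ) (b : ℕ → R) (t : Aˣ) (u : A)
    (hu : u ^ 2 = ∑ i ∈ Finset.range (n + 1), b i • (t : A) ^ i) (k : ℤ) :
    (((2 * k : ℤ) : R) * b 0) •
        (LinearMap.range D.toLinearMap).mkQ ((↑(t ^ (k - 1)) * u) • D t) =
      -∑ j ∈ Finset.Icc 1 n, (((3 * (j : ℤ) + 2 * k : ℤ) : R) * b j) •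
        (LinearMap.range D.toLinearMap).mkQ ((↑(t ^ (k + (j : ℤ) - 1)) * u) • D t) := by
  have hu_zpow : u ^ 2 = ∑ i ∈ Finset.range (n + 1), b i • (↑(t ^ (i : ℤ)) : A) := by
    simpa only [zpow_natCast, Units.val_pow_eq_pow_val] using hu
  have hexact : (LinearMap.range D.toLinearMap).mkQ (2 • D (↑(t ^ k) * u ^ 3)) = 0 :=
    (Submodule.Quotient.mk_eq_zero _).2 ⟨2 • (↑(t ^ k) * u ^ 3), map_nsmul D 2 _⟩
  rw [two_nsmul_derivation_zpow_mul_cube D _ _ b t u hu_zpow, map_sum,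
    Finset.sum_range_eq_add_Ico _ n.add_one_pos, Finset.Ico_add_one_right_eq_Icc] at hexact
  simp only [map_smul, Nat.cast_zero, mul_zero, zero_add, add_zero] at hexact
  exact eq_neg_of_add_eq_zero_left hexact

end Derivation

/-- For every integer `k`,
`2k·a₀·\overline{t^{k-1}u dt} = −∑_{j=1}^{n} (3j+2k)·a_j·\overline{t^{k+j-1}u dt}`
holds in `Ω¹_R/dR`. -/
theorem statement2 (hn : 1 ≤ n) (han : a n = 1) (ha0 : a 0 ≠ 0)
    (hsep : (pPoly n a).Separable) (k : ℤ) :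
    (((2 * k : ℤ) : ℂ) * a 0) •
        fdg n a (tpow n a (k - 1) * uElt n a) (tpow n a 1) =
      -∑ j ∈ Finset.Icc 1 n,
        (((3 * (j : ℤ) + 2 * k : ℤ) : ℂ) * a j) •
          fdg n a (tpow n a (k + (j : ℤ) - 1) * uElt n a) (tpow n a 1) := by
  simpa only [coe_tUnit, coe_tUnit_zpow, Submodule.mkQ_apply] using
    statement2_general (KaehlerDifferential.D ℂ (HyperRing n a)) n a (tUnit n a) (uElt n a)
      (uElt_sq n a) k
end
end

section
/- For all integers i and j, \overline{t^i u\,d(t^j u)} = ∑_{k=0}^{n} (j + k/2)·a_k·δ_{i+j,−k}·ω_0 in Ω¹_R/dR. -/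
open Polynomial LaurentPolynomial

noncomputable section

variable (n : ℕ) (a : ℕ → ℂ)

/-!
The class of `f dg` modulo exact differentials is antisymmetric, so `2 tⁱu d(tʲu)` is congruent to
`tⁱu d(tʲu) - tʲu d(tⁱu)`. In this difference the terms containing `du` cancel, leaving
`(j - i) tⁱ⁺ʲ u² t⁻¹dt`, a Laurent polynomial multiple of `t⁻¹dt`. As `m tᵐ t⁻¹dt = d(tᵐ)`, only
the constant term of `tⁱ⁺ʲ p(t)` survives, and `(j - i) / 2 = j + k / 2` when `i + j = -k`.
-/

section Derivation

variable {K A M : Type*} [CommRing K] [CommRing A] [Algebra K A] [AddCommGroup M] [Module A M]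
  [Module K M]

theorem two_smul_smul_deriv_sModEq (D : Derivation K A M) (f g : A) :
    (2 : K) • f • D g ≡ f • D g - g • D f [SMOD LinearMap.range (D : A →ₗ[K] M)] := by
  rw [SModEq.sub_mem]
  refine ⟨f * g, ?_⟩
  rw [Derivation.coeFn_coe, D.leibniz, two_smul]
  abel

theorem mul_smul_deriv_mul_sub (D : Derivation K A M) (f g u : A) :
    (f * u) • D (g * u) - (g * u) • D (f * u) = u ^ 2 • (f • D g - g • D f) := by
  rw [D.leibniz, D.leibniz]
  module

variable [Algebra K[T;T⁻¹] A]

/-- The logarithmic differential `t⁻¹ dt` of the variable `t` of `K[t, t⁻¹]`, formed with a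
derivation on a `K[t, t⁻¹]`-algebra. -/
def dlogT (D : Derivation K A M) : M :=
  algebraMap K[T;T⁻¹] A (T (-1)) • D (algebraMap K[T;T⁻¹] A (T 1))

theorem T_neg_smul_deriv_T (D : Derivation K A M) (m : ℤ) :
    algebraMap K[T;T⁻¹] A (T (-m)) • D (algebraMap K[T;T⁻¹] A (T m)) = m • dlogT D := by
  let logDeriv : ℤ →+ M := AddMonoidHom.mk'
    (fun m ↦ algebraMap K[T;T⁻¹] A (T (-m)) • D (algebraMap K[T;T⁻¹] A (T m))) fun k l ↦ by
      have cancel (r : ℤ) :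
          algebraMap K[T;T⁻¹] A (T (-r)) * algebraMap K[T;T⁻¹] A (T r) = 1 := by
        rw [← map_mul, ← T_add, neg_add_cancel, T_zero, map_one]
      rw [neg_add, T_add, T_add, map_mul, map_mul, D.leibniz]
      linear_combination (norm := module)
        cancel k • algebraMap K[T;T⁻¹] A (T (-l)) • D (algebraMap K[T;T⁻¹] A (T l)) +
        cancel l • algebraMap K[T;T⁻¹] A (T (-k)) • D (algebraMap K[T;T⁻¹] A (T k))
  calc logDeriv m = logDeriv (m • 1) := by rw [zsmul_one, Int.cast_id]
    _ = m • logDeriv 1 := map_zsmul logDeriv m 1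

theorem deriv_T (D : Derivation K A M) (m : ℤ) :
    D (algebraMap K[T;T⁻¹] A (T m)) = m • algebraMap K[T;T⁻¹] A (T m) • dlogT D := by
  rw [smul_comm, ← T_neg_smul_deriv_T, smul_smul, ← map_mul, ← T_add, add_neg_cancel, T_zero,
    map_one, one_smul]

theorem T_smul_deriv_T_sub (D : Derivation K A M) (i j : ℤ) :
    algebraMap K[T;T⁻¹] A (T i) • D (algebraMap K[T;T⁻¹] A (T j)) -
        algebraMap K[T;T⁻¹] A (T j) • D (algebraMap K[T;T⁻¹] A (T i)) =
      (j - i) • algebraMap K[T;T⁻¹] A (T (i + j)) • dlogT D := by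
  rw [deriv_T, deriv_T, T_add, map_mul]
  module

end Derivation

section Residue

variable {K A M : Type*} [Field K] [CharZero K] [CommRing A] [Algebra K A] [Algebra K[T;T⁻¹] A]
  [AddCommGroup M] [Module A M] [Module K M]

theorem T_smul_dlogT_sModEq (D : Derivation K A M) (m : ℤ) :
    algebraMap K[T;T⁻¹] A (T m) • dlogT D ≡ (T m : K[T;T⁻¹]).coeff 0 • dlogT D
      [SMOD LinearMap.range (D : A →ₗ[K] M)] := by
  rw [T_apply]
  split_ifs with hm
  · rw [hm, T_zero, map_one, one_smul, one_smul]
  · rw [zero_smul, SModEq.zero]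
    refine ⟨(m : K)⁻¹ • algebraMap K[T;T⁻¹] A (T m), ?_⟩
    rw [Derivation.coeFn_coe, D.map_smul, deriv_T, ← Int.cast_smul_eq_zsmul K,
      inv_smul_smul₀ (Int.cast_ne_zero.mpr hm)]

variable [IsScalarTower K A M] [IsScalarTower K K[T;T⁻¹] A]

theorem algebraMap_smul_dlogT_sModEq (D : Derivation K A M) (f : K[T;T⁻¹]) :
    algebraMap K[T;T⁻¹] A f • dlogT D ≡ f.coeff 0 • dlogT D
      [SMOD LinearMap.range (D : A →ₗ[K] M)] := by
  induction f using LaurentPolynomial.induction_on' with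
  | add f g hf hg =>
    rw [map_add, add_smul, AddMonoidAlgebra.coeff_add, Finsupp.add_apply, add_smul]
    exact hf.add hg
  | C_mul_T m c =>
    rw [← LaurentPolynomial.smul_eq_C_mul, ← IsScalarTower.coe_toAlgHom' K, map_smul, smul_assoc,
      AddMonoidAlgebra.coeff_smul, Finsupp.smul_apply, smul_assoc]
    exact (T_smul_dlogT_sModEq D m).smul c

theorem statement5_general (D : Derivation K A M) (f : K[T;T⁻¹]) (u : A)
    (hu : u ^ 2 = algebraMap K[T;T⁻¹] A f) (i j : ℤ) :
    (algebraMap K[T;T⁻¹] A (T i) * u) • D (algebraMap K[T;T⁻¹] A (T j) * u) ≡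
      (((j : K) - i) / 2 * f.coeff (-(i + j))) • dlogT D
      [SMOD LinearMap.range (D : A →ₗ[K] M)] := by
  set ω := (algebraMap K[T;T⁻¹] A (T i) * u) • D (algebraMap K[T;T⁻¹] A (T j) * u)
  have coeff_zero : (f * T (i + j)).coeff 0 = f.coeff (-(i + j)) := by
    rw [← T_mul, T, AddMonoidAlgebra.coeff_single_mul_apply, one_mul, add_zero]
  have two_smul_ω : (2 : K) • ω ≡ ((j : K) - i) • f.coeff (-(i + j)) • dlogT D
      [SMOD LinearMap.range (D : A →ₗ[K] M)] := by
    refine (two_smul_smul_deriv_sModEq D _ _).trans ?_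
    rw [mul_smul_deriv_mul_sub, T_smul_deriv_T_sub, hu, smul_comm, smul_smul, ← map_mul,
      ← Int.cast_smul_eq_zsmul K, Int.cast_sub, ← coeff_zero]
    exact (algebraMap_smul_dlogT_sModEq D _).smul _
  calc ω = (2 : K)⁻¹ • (2 : K) • ω := (inv_smul_smul₀ two_ne_zero ω).symm
    _ ≡ (2 : K)⁻¹ • ((j : K) - i) • f.coeff (-(i + j)) • dlogT D
        [SMOD LinearMap.range (D : A →ₗ[K] M)] := two_smul_ω.smul _
    _ = (((j : K) - i) / 2 * f.coeff (-(i + j))) • dlogT D := by module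

end Residue

theorem uElt_sq_s5 : uElt n a ^ 2 = algebraMap ℂ[T;T⁻¹] (HyperRing n a) (pPoly n a).toLaurent := by
  have root := AdjoinRoot.eval₂_root
    ((X : Polynomial ℂ[T;T⁻¹]) ^ 2 - Polynomial.C (pPoly n a).toLaurent)
  rwa [eval₂_sub, eval₂_X_pow, Polynomial.eval₂_C, sub_eq_zero] at root

theorem coeff_toLaurent_pPoly (m : ℤ) :
    (pPoly n a).toLaurent.coeff m =
      ∑ k ∈ Finset.range (n + 1), a k * if (k : ℤ) = m then 1 else 0 := by
  simp only [pPoly, map_sum, toLaurent_C_mul_X_pow, ← LaurentPolynomial.smul_eq_C_mul,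
    AddMonoidAlgebra.coeff_sum, AddMonoidAlgebra.coeff_smul, Finsupp.finsetSum_apply,
    Finsupp.smul_apply, T_apply, smul_eq_mul]

theorem sum_mul_ite_eq_mul_coeff_toLaurent (i j : ℤ) :
    ∑ k ∈ Finset.range (n + 1),
        ((j : ℂ) + (k : ℂ) / 2) * a k * (if i + j = -(k : ℤ) then 1 else 0) =
      ((j : ℂ) - i) / 2 * (pPoly n a).toLaurent.coeff (-(i + j)) := by
  rw [coeff_toLaurent_pPoly, Finset.mul_sum]
  refine Finset.sum_congr rfl fun k _ ↦ ?_
  simp only [eq_neg_iff_add_eq_zero, add_comm (k : ℤ)]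
  split_ifs with h
  · have h' : (i : ℂ) + j + k = 0 := mod_cast h
    linear_combination a k / 2 * h'
  · simp only [mul_zero]

/-- For all integers `i, j`,
`\overline{tⁱu d(tʲu)} = ∑_{k=0}^{n} (j + k/2)·a_k·δ_{i+j,−k}·ω₀` in `Ω¹_R/dR`. -/
theorem statement5 (hn : 1 ≤ n) (han : a n = 1) (ha0 : a 0 ≠ 0)
    (hsep : (pPoly n a).Separable) (i j : ℤ) :
    fdg n a (tpow n a i * uElt n a) (tpow n a j * uElt n a) =
      (∑ k ∈ Finset.range (n + 1),
        ((j : ℂ) + (k : ℂ) / 2) * a k * (if i + j = -(k : ℤ) then 1 else 0)) • ω0 n a := by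
  rw [sum_mul_ite_eq_mul_coeff_toLaurent]
  exact statement5_general (KaehlerDifferential.D ℂ (HyperRing n a)) _ _ (uElt_sq_s5 n a) i j
end
end

section
/- The Lie algebra ĝ = (𝔤 ⊗_ℂ R) ⊕ Ω¹_R/dR with Kassel's bracket is a universal central extension of the current algebra 𝔤 ⊗_ℂ R: the projection π: ĝ → 𝔤 ⊗ R, x⊗f + ω ↦ x⊗f, is a surjective Lie algebra homomorphism whose kernel Ω¹_R/dR is contained in the center of ĝ, and for every Lie algebra E over ℂ together with a surjective Lie algebra homomorphism τ: E → 𝔤 ⊗ R whose kernel is contained in the center of E, there exists a unique Lie algebra homomorphism φ: ĝ → E with τ ∘ φ = π. -/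
open TensorProduct
open Polynomial LaurentPolynomial

noncomputable section

variable (n : ℕ) (a : ℕ → ℂ)

variable (𝔤 : Type) [LieRing 𝔤] [LieAlgebra ℂ 𝔤]

/-- The current algebra `𝔤 ⊗ R` (with the tensor factors written as `R ⊗ 𝔤`, carrying
the Lie bracket `[x⊗f, y⊗g] = [x,y]⊗fg`). -/
abbrev CurrentAlg : Type := HyperRing n a ⊗[ℂ] 𝔤

/-- The underlying vector space `ĝ = (𝔤 ⊗ R) ⊕ Ω¹_R/dR`. -/
abbrev HatG : Type := CurrentAlg n a 𝔤 × OmegaQ n a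

/-- The projection `π : ĝ → 𝔤 ⊗ R`, `x⊗f + ω ↦ x⊗f`. -/
abbrev projPi : HatG n a 𝔤 →ₗ[ℂ] CurrentAlg n a 𝔤 :=
  LinearMap.fst ℂ (CurrentAlg n a 𝔤) (OmegaQ n a)

/-!
Let `τ : E → 𝔤 ⊗ R` be a central extension with a linear section `s`. The bracket `⁅s u, s v⁆` is
a two-cocycle on `𝔤 ⊗ R` with values in the vector space `E`, so the lift to Kassel's extension
exists as soon as every two-cocycle has the form `h ⁅u, v⁆ + C (ψ u v)`, with `ψ` Kassel's cocycle
and `h`, `C` linear. It is unique because a lift is determined on brackets, which span Kassel's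
extension.

Restrict a cocycle `b` to `𝔤 × (𝔤 ⊗ R)`. The Casimir element of the Killing form acts as the
identity on `𝔤`, and contracting with it (as in Whitehead's first lemma) shows that the
restriction has the form `h ⁅u, v⁆`. Once this coboundary is subtracted, the cocycle identity with
one argument in `𝔤` says that `(x, y) ↦ b (x ⊗ f, y ⊗ g)` is an invariant form on `𝔤`, hence
`κ(x, y) c(f, g)` by Schur's lemma. What remains of the cocycle identity is
`c(f, gk) = c(fg, k) + c(fk, g)`, and `c(1, g) = 0`, which is exactly what is needed for `c` to
factor through `f dg ∈ Ω¹_R/dR`.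
-/

namespace Kassel

open Module

section InvariantForm

variable {K G M V ι : Type*} [Field K] [LieRing G] [AddCommGroup M] [Module K M]
  [LieRingModule G M] [AddCommGroup V] [Module K V] {Φ : LinearMap.BilinForm K M}

lemma sum_apply_smul_dualBasis [Fintype ι] [DecidableEq ι] (hΦ : Φ.Nondegenerate)
    (e : Basis ι K M) (m : M) : ∑ i, Φ m (e i) • Φ.dualBasis hΦ e i = m := by
  simpa only [LinearMap.BilinForm.dualBasis_repr_apply] using (Φ.dualBasis hΦ e).sum_repr m

lemma sum_apply_dualBasis_smul [Fintype ι] [DecidableEq ι] (hΦ : Φ.Nondegenerate)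
    (hs : Φ.IsSymm) (e : Basis ι K M) (m : M) : ∑ i, Φ m (Φ.dualBasis hΦ e i) • e i = m := by
  simpa only [LinearMap.BilinForm.dualBasis_dualBasis hΦ hs] using
    sum_apply_smul_dualBasis hΦ (Φ.dualBasis hΦ e) m

lemma trace_eq_sum_apply_dualBasis [Fintype ι] [DecidableEq ι] (hΦ : Φ.Nondegenerate)
    (e : Basis ι K M) (T : End K M) :
    LinearMap.trace K M T = ∑ i, Φ (T (Φ.dualBasis hΦ e i)) (e i) := by
  simp only [LinearMap.trace_eq_matrix_trace K (Φ.dualBasis hΦ e), Matrix.trace, Matrix.diag_apply,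
    LinearMap.toMatrix_apply, LinearMap.BilinForm.dualBasis_repr_apply]

/-- The canonical element `∑ i, e i ⊗ d i` of `M ⊗ M` is fixed by the Lie algebra: the matrices of
the action on the dual bases `e` and `d` are negative transposes of each other. -/
lemma sum_lie_apply_dualBasis_eq_zero [Fintype ι] [DecidableEq ι] (hΦ : Φ.Nondegenerate)
    (hs : Φ.IsSymm) (hinv : Φ.lieInvariant G) (e : Basis ι K M) (b : M →ₗ[K] M →ₗ[K] V) (x : G) :
    ∑ i, (b ⁅x, e i⁆ (Φ.dualBasis hΦ e i) + b (e i) ⁅x, Φ.dualBasis hΦ e i⁆) = 0 := by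
  set d := Φ.dualBasis hΦ e
  have expand_left (i : ι) : b ⁅x, e i⁆ (d i) = ∑ j, Φ ⁅x, e i⁆ (d j) • b (e j) (d i) := by
    conv_lhs => rw [← sum_apply_dualBasis_smul hΦ hs e ⁅x, e i⁆]
    simp only [map_sum, map_smul, LinearMap.sum_apply, LinearMap.smul_apply, d]
  have expand_right (i : ι) : b (e i) ⁅x, d i⁆ = ∑ j, Φ ⁅x, d i⁆ (e j) • b (e i) (d j) := by
    conv_lhs => rw [← sum_apply_smul_dualBasis hΦ e ⁅x, d i⁆]
    simp only [map_sum, map_smul, d]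
  have skew (i j : ι) : Φ ⁅x, e i⁆ (d j) = -Φ ⁅x, d j⁆ (e i) := by rw [hinv, hs.eq]
  simp only [Finset.sum_add_distrib, expand_left, expand_right]
  rw [Finset.sum_comm]
  simp only [skew, neg_smul, Finset.sum_neg_distrib, neg_add_cancel]

/-- Schur's lemma for the endomorphism `T` with `Φ (T m) = b m`: an eigenspace of `T` is the kernel
of `b - μ • Φ`, hence a submodule. -/
lemma exists_eq_smul_of_lieInvariant [IsAlgClosed K] [FiniteDimensional K M]
    [LieModule.IsIrreducible K G M] (hΦ : Φ.Nondegenerate) (hinv : Φ.lieInvariant G)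
    {b : LinearMap.BilinForm K M} (hb : b.lieInvariant G) : ∃ μ : K, b = μ • Φ := by
  have := LieModule.nontrivial_of_isIrreducible K G M
  let T : End K M := (Φ.toDual hΦ).symm.toLinearMap ∘ₗ b
  have hT (m m' : M) : Φ (T m) m' = b m m' :=
    LinearMap.BilinForm.apply_toDual_symm_apply (hB := hΦ) ..
  obtain ⟨μ, hμ⟩ := Module.End.exists_eigenvalue T
  obtain ⟨v, hv⟩ := hμ.exists_hasEigenvector
  let N : LieSubmodule K G M :=
    { LinearMap.ker (b - μ • Φ) with
      lie_mem := by
        intro x m hm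
        replace hm : (b - μ • Φ) m = 0 := hm
        refine LinearMap.mem_ker.2 (LinearMap.ext fun m' => ?_)
        have h := LinearMap.congr_fun hm ⁅x, m'⁆
        simp only [LinearMap.sub_apply, LinearMap.smul_apply, smul_eq_mul, LinearMap.zero_apply,
          hb x m m', hinv x m m'] at h ⊢
        linear_combination -h }
  have hvN : v ∈ N := LinearMap.mem_ker.2 <| LinearMap.ext fun m => by
    simp [← hT, hv.apply_eq_smul]
  have hN : N = ⊤ := (eq_bot_or_eq_top N).resolve_left fun h =>
    hv.2 ((LieSubmodule.mem_bot v).1 (h ▸ hvN))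
  refine ⟨μ, sub_eq_zero.1 (LinearMap.ext fun m => LinearMap.mem_ker.1 ?_)⟩
  exact (hN ▸ LieSubmodule.mem_top m : m ∈ N)

end InvariantForm

section KillingForm

variable {K G V : Type*} [Field K] [LieRing G] [LieAlgebra K G]
  [AddCommGroup V] [Module K V]

lemma sum_lie_lie_dualBasis_killingForm {ι : Type*} [Fintype ι] [DecidableEq ι]
    (hκ : (killingForm K G).Nondegenerate) (e : Basis ι K G) (x : G) :
    ∑ i, ⁅e i, ⁅(killingForm K G).dualBasis hκ e i, x⁆⁆ = x := by
  set d := (killingForm K G).dualBasis hκ e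
  have hinv := LieModule.traceForm_apply_lie_apply' K G G
  have move_lie (i : ι) (y : G) :
      killingForm K G ⁅e i, ⁅d i, x⁆⁆ y = killingForm K G ⁅y, ⁅x, d i⁆⁆ (e i) := by
    rw [hinv (e i), hinv y, ← lie_skew (e i) y, ← lie_skew (d i) x]
    simp only [map_neg, LinearMap.neg_apply, neg_neg]
  refine sub_eq_zero.1 (hκ.1 _ fun y => ?_)
  rw [map_sub, LinearMap.sub_apply, sub_eq_zero]
  calc killingForm K G (∑ i, ⁅e i, ⁅d i, x⁆⁆) y
      = ∑ i, killingForm K G ⁅y, ⁅x, d i⁆⁆ (e i) := by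
        simp only [map_sum, LinearMap.sum_apply, move_lie]
    _ = LinearMap.trace K G (LieModule.toEnd K G G y ∘ₗ LieModule.toEnd K G G x) := by
        simp only [trace_eq_sum_apply_dualBasis hκ e, LinearMap.comp_apply,
          LieModule.toEnd_apply_apply, d]
    _ = killingForm K G x y := LieModule.traceForm_comm K G G y x

lemma exists_killingForm_lie_eq_one (hκ : (killingForm K G).Nondegenerate)
    (hG : ¬IsLieAbelian G) : ∃ x y z : G, killingForm K G x ⁅y, z⁆ = 1 := by
  contrapose! hG
  refine ⟨fun y z => hκ.2 _ fun x => ?_⟩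
  by_contra hne
  refine hG ((killingForm K G x ⁅y, z⁆)⁻¹ • x) y z ?_
  rw [map_smul, LinearMap.smul_apply, smul_eq_mul, inv_mul_cancel₀ hne]

lemma exists_eq_comp_lie_of_leibniz [FiniteDimensional K G]
    (hκ : (killingForm K G).Nondegenerate) (b : G →ₗ[K] G →ₗ[K] V)
    (hb : ∀ x y z : G, b x ⁅y, z⁆ = b ⁅x, y⁆ z + b y ⁅x, z⁆) :
    ∃ h : G →ₗ[K] V, ∀ x y, b x y = h ⁅x, y⁆ := by
  let e := finBasis K G
  let d := (killingForm K G).dualBasis hκ e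
  have casimir (x : G) : ∑ i, ⁅e i, ⁅d i, x⁆⁆ = x := sum_lie_lie_dualBasis_killingForm hκ e x
  let h : G →ₗ[K] V := ∑ i, b (e i) ∘ₗ LieAlgebra.ad K G (d i)
  have h_apply (y : G) : h y = ∑ i, b (e i) ⁅d i, y⁆ := by
    simp only [h, LinearMap.sum_apply, LinearMap.comp_apply, LieAlgebra.ad_apply]
  refine ⟨h, fun x y => ?_⟩
  have invariance : ∑ i, (b ⁅x, e i⁆ ⁅d i, y⁆ + b (e i) ⁅⁅x, d i⁆, y⁆) = 0 := by
    exact sum_lie_apply_dualBasis_eq_zero hκ ⟨LieModule.traceForm_comm K G G⟩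
      (LieModule.traceForm_apply_lie_apply' K G G) e
      (b.compl₂ ((LieModule.toEnd K G G : G →ₗ[K] End K G).flip y)) x
  calc b x y = ∑ i, b x ⁅e i, ⁅d i, y⁆⁆ := by rw [← map_sum, casimir]
    _ = ∑ i, (b ⁅x, e i⁆ ⁅d i, y⁆ + b (e i) ⁅⁅x, d i⁆, y⁆) + ∑ i, b (e i) ⁅d i, ⁅x, y⁆⁆ := by
        simp only [hb x, leibniz_lie x (d _) y, map_add, ← Finset.sum_add_distrib, add_assoc]
    _ = h ⁅x, y⁆ := by rw [invariance, zero_add, h_apply]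

lemma exists_eq_killingForm_smul_of_lieInvariant [IsAlgClosed K] [FiniteDimensional K G]
    [LieAlgebra.IsSimple K G] (hκ : (killingForm K G).Nondegenerate) (b : G →ₗ[K] G →ₗ[K] V)
    (hb : ∀ x y z : G, b ⁅x, y⁆ z = -b y ⁅x, z⁆) :
    ∃ c : V, ∀ x y, b x y = killingForm K G x y • c := by
  obtain ⟨x₀, y₀, z₀, h₀⟩ := exists_killingForm_lie_eq_one hκ (LieAlgebra.IsSimple.non_abelian K)
  refine ⟨b x₀ ⁅y₀, z₀⁆, fun x y => ?_⟩
  rw [← sub_eq_zero, ← forall_dual_apply_eq_zero_iff K]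
  intro f
  obtain ⟨μ, hμ⟩ := exists_eq_smul_of_lieInvariant (b := b.compr₂ f) hκ
    (LieModule.traceForm_apply_lie_apply' K G G) (fun x y z => by
      simp only [LinearMap.compr₂_apply, hb, map_neg])
  have f_apply (x y : G) : f (b x y) = μ * killingForm K G x y :=
    LinearMap.congr_fun₂ hμ x y
  rw [map_sub, map_smul, f_apply, f_apply, h₀, smul_eq_mul]
  ring

end KillingForm


section Differentials

variable (K R V : Type*) [CommRing K] [CommRing R] [Algebra K R] [AddCommGroup V] [Module K V]

/-- The quotient `Ω¹_R/dR` of the Kähler differentials of a `K`-algebra `R` by the exact ones. -/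
abbrev DifferentialsModExact : Type _ :=
  Ω[R⁄K] ⧸ LinearMap.range (KaehlerDifferential.D K R).toLinearMap

/-- The pairing `(f, g) ↦ \overline{f dg}` with values in `Ω¹_R/dR`. -/
def diffClass : R →ₗ[K] R →ₗ[K] DifferentialsModExact K R :=
  LinearMap.mk₂ K (fun f g => Submodule.Quotient.mk (f • KaehlerDifferential.D K R g))
    (by simp [add_smul]) (by simp) (by simp [smul_add])
    (fun z f g => by rw [Derivation.map_smul, smul_comm, Submodule.Quotient.mk_smul])

/-- The `R`-module structure on `Hom_K(R, V)` through the source, `(r • p) s = p (r * s)`. It is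
not an instance, since it would compete with the action through the target. -/
abbrev coinducedModule : Module R (R →ₗ[K] V) :=
  Module.compHom (R →ₗ[K] V) (show R →+* Rᵈᵐᵃ from (RingEquiv.toOpposite R).toRingHom)

variable {K R V}

lemma diffClass_one_left (g : R) : diffClass K R 1 g = 0 :=
  (Submodule.Quotient.mk_eq_zero _).2 ⟨g, (one_smul R _).symm⟩

open scoped Pointwise in
lemma span_range_diffClass :
    Submodule.span K (Set.range fun p : R × R => diffClass K R p.1 p.2) = ⊤ := by
  have span_smul_D : Submodule.span K
      ((Set.univ : Set R) • Set.range (KaehlerDifferential.D K R)) = ⊤ := by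
    rw [Submodule.span_smul_of_span_eq_top (by simp), KaehlerDifferential.span_range_derivation,
      Submodule.restrictScalars_top]
  have h := congrArg (Submodule.map (Submodule.mkQ
    (LinearMap.range (KaehlerDifferential.D K R).toLinearMap))) span_smul_D
  rw [Submodule.map_span, Submodule.map_top, Submodule.range_mkQ] at h
  rw [← h]
  congr 1
  ext ω
  simp [Set.mem_smul, diffClass]

/-- `c_leibniz` says that `g ↦ (f ↦ c f g)` is a derivation from `R` to `Hom_K(R, V)`, where `R`
acts through the source. -/
lemma exists_comp_diffClass (c : R →ₗ[K] R →ₗ[K] V) (c_one : ∀ g, c 1 g = 0)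
    (c_leibniz : ∀ f g k, c f (g * k) = c (f * g) k + c (f * k) g) :
    ∃ C : DifferentialsModExact K R →ₗ[K] V, ∀ f g, C (diffClass K R f g) = c f g := by
  let := coinducedModule K R V
  have smul_apply (r s : R) (p : R →ₗ[K] V) : (r • p) s = p (r * s) := rfl
  have : IsScalarTower K R (R →ₗ[K] V) :=
    ⟨fun z r p => LinearMap.ext fun s => by simp [smul_apply]⟩
  let D : Derivation K R (R →ₗ[K] V) := Derivation.mk' c.flip fun g k =>
    LinearMap.ext fun f => by
      simp only [LinearMap.flip_apply, LinearMap.add_apply, smul_apply, c_leibniz, mul_comm]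
  let C₀ : Ω[R⁄K] →ₗ[K] V :=
    LinearMap.applyₗ (1 : R) ∘ₗ D.liftKaehlerDifferential.restrictScalars K
  have C₀_smul_D (f g : R) : C₀ (f • KaehlerDifferential.D K R g) = c f g := by
    simp [C₀, smul_apply, D]
  have C₀_exact : LinearMap.range (KaehlerDifferential.D K R).toLinearMap ≤ LinearMap.ker C₀ := by
    rintro _ ⟨g, rfl⟩
    simpa [c_one] using C₀_smul_D 1 g
  exact ⟨Submodule.liftQ _ C₀ C₀_exact, C₀_smul_D⟩

end Differentials

section TwoCocycle

variable {K L M V E : Type*} [CommRing K] [LieRing L] [LieAlgebra K L] [AddCommGroup M] [Module K M]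
  [AddCommGroup V] [Module K V] [LieRing E] [LieAlgebra K E]

/-- Two-cocycles on a Lie algebra with values in a `K`-module with trivial action. The cocycle
identity is written in Leibniz form, so that it mirrors `leibniz_lie`. Unlike Mathlib's bundled
2-cocycles, this needs no module instance for the trivial action on `V`. -/
structure IsTwoCocycle (b : L →ₗ[K] L →ₗ[K] V) : Prop where
  self (u : L) : b u u = 0
  leibniz (u v w : L) : b u ⁅v, w⁆ = b ⁅u, v⁆ w + b v ⁅u, w⁆

namespace IsTwoCocycle

variable {b : L →ₗ[K] L →ₗ[K] V}

lemma neg_apply (hb : IsTwoCocycle b) (u v : L) : -b u v = b v u :=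
  LinearMap.IsAlt.neg hb.self u v

lemma sub_coboundary (hb : IsTwoCocycle b) (h : L →ₗ[K] V) :
    IsTwoCocycle (b - (LieModule.toEnd K L L : L →ₗ[K] End K L).compr₂ h) where
  self u := by simp [hb.self]
  leibniz u v w := by
    simp only [LinearMap.sub_apply, LinearMap.compr₂_apply, LieHom.coe_toLinearMap,
      LieModule.toEnd_apply_apply]
    rw [hb.leibniz u v w, leibniz_lie u v w, map_add]
    abel

end IsTwoCocycle

lemma lie_eq_lie_of_map_eq {τ : E →ₗ⁅K⁆ L} (hτ : τ.ker ≤ LieAlgebra.center K E)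
    {e₁ e₂ e₁' e₂' : E} (h : τ e₁ = τ e₂) (h' : τ e₁' = τ e₂') : ⁅e₁, e₁'⁆ = ⁅e₂, e₂'⁆ := by
  have central {e e' : E} (h : τ e = τ e') (f : E) : ⁅f, e⁆ = ⁅f, e'⁆ := by
    have : e - e' ∈ LieAlgebra.center K E := hτ (by simp [h])
    rw [← sub_eq_zero, ← lie_sub]
    exact (LieModule.mem_maxTrivSubmodule K E E _).1 this f
  rw [central h' e₁, ← lie_skew, central h e₂', lie_skew]

lemma isTwoCocycle_lie_section {τ : E →ₗ⁅K⁆ L} (hτ : τ.ker ≤ LieAlgebra.center K E)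
    {s : L →ₗ[K] E} (hs : ∀ u, τ (s u) = u) :
    IsTwoCocycle ((LieModule.toEnd K E E : E →ₗ[K] End K E).compl₁₂ s s) where
  self u := by simp
  leibniz u v w := by
    have lie_section (e : E) (u v : L) : ⁅e, s ⁅u, v⁆⁆ = ⁅e, ⁅s u, s v⁆⁆ :=
      lie_eq_lie_of_map_eq hτ rfl (by simp [hs])
    have section_lie (e : E) (u v : L) : ⁅s ⁅u, v⁆, e⁆ = ⁅⁅s u, s v⁆, e⁆ :=
      lie_eq_lie_of_map_eq hτ (by simp [hs]) rfl
    simp [lie_section, section_lie]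

/-- The `∃!` is taken over linear maps out of `L × M`, on which `ψ` defines the bracket
`⁅(u, m), (v, m')⁆ = (⁅u, v⁆, ψ u v)`. -/
theorem existsUnique_lift_of_forall_isTwoCocycle [Module.Projective K L] {ψ : L →ₗ[K] L →ₗ[K] M}
    (hspan : Submodule.span K (Set.range fun p : L × L => (⁅p.1, p.2⁆, ψ p.1 p.2)) = ⊤)
    (hψ : ∀ b : L →ₗ[K] L →ₗ[K] E, IsTwoCocycle b →
      ∃ (h : L →ₗ[K] E) (C : M →ₗ[K] E), ∀ u v, b u v = h ⁅u, v⁆ + C (ψ u v))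
    {τ : E →ₗ⁅K⁆ L} (hτ : Function.Surjective τ) (hcen : τ.ker ≤ LieAlgebra.center K E) :
    ∃! φ : L × M →ₗ[K] E, (∀ u v : L × M, φ (⁅u.1, v.1⁆, ψ u.1 v.1) = ⁅φ u, φ v⁆) ∧
      (τ : E →ₗ[K] L) ∘ₗ φ = LinearMap.fst K L M := by
  obtain ⟨s, hs⟩ := Module.projective_lifting_property (τ : E →ₗ[K] L) LinearMap.id hτ
  replace hs : ∀ u, τ (s u) = u := LinearMap.congr_fun hs
  obtain ⟨h, C, hC⟩ := hψ _ (isTwoCocycle_lie_section hcen hs)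
  let φ : L × M →ₗ[K] E := h.coprod C
  have φ_bracket (u v : L) : φ (⁅u, v⁆, ψ u v) = ⁅s u, s v⁆ := (hC u v).symm
  have τ_comp_φ : (τ : E →ₗ[K] L) ∘ₗ φ = LinearMap.fst K L M :=
    LinearMap.ext_on_range hspan fun p => by simp [φ_bracket, hs]
  refine ⟨φ, ⟨fun u v => ?_, τ_comp_φ⟩, fun φ' ⟨φ'_bracket, τ_comp_φ'⟩ => ?_⟩
  · rw [φ_bracket]
    have τ_φ (u : L × M) : τ (s u.1) = τ (φ u) :=
      (hs u.1).trans (LinearMap.congr_fun τ_comp_φ u).symm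
    exact lie_eq_lie_of_map_eq hcen (τ_φ u) (τ_φ v)
  · refine LinearMap.ext_on_range hspan fun p => ?_
    have τ_φ' (u : L) : τ (φ' (u, 0)) = τ (s u) :=
      (LinearMap.congr_fun τ_comp_φ' (u, 0)).trans (hs u).symm
    rw [φ_bracket, φ'_bracket (p.1, 0) (p.2, 0)]
    exact lie_eq_lie_of_map_eq hcen (τ_φ' p.1) (τ_φ' p.2)

end TwoCocycle

section CurrentAlgebra

variable (K G R : Type*) [CommRing K] [LieRing G] [LieAlgebra K G] [CommRing R] [Algebra K R]

/-- Kassel's cocycle `(x ⊗ f, y ⊗ g) ↦ κ(x, y) \overline{f dg}` on the current algebra, whose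
tensor factors are written here in the order `R ⊗ G`. -/
def kasselCocycle : R ⊗[K] G →ₗ[K] R ⊗[K] G →ₗ[K] DifferentialsModExact K R :=
  (TensorProduct.map₂ (diffClass K R) (killingForm K G)).compr₂ (TensorProduct.rid K _).toLinearMap

variable {K G R} in
lemma kasselCocycle_tmul (f g : R) (x y : G) :
    kasselCocycle K G R (f ⊗ₜ x) (g ⊗ₜ y) = killingForm K G x y • diffClass K R f g := by
  simp [kasselCocycle]

/-- The underlying vector space of Kassel's extension of the current algebra `R ⊗ G`. -/
abbrev KasselSpace : Type _ := (R ⊗[K] G) × DifferentialsModExact K R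

/-- The bracket on Kassel's extension, for which the summand `Ω¹_R/dR` is central. -/
def kasselBracket : KasselSpace K G R →ₗ[K] KasselSpace K G R →ₗ[K] KasselSpace K G R :=
  LinearMap.mk₂ K (fun u v => (⁅u.1, v.1⁆, kasselCocycle K G R u.1 v.1))
    (by simp) (by simp) (by simp) (by simp)

variable {K G R}

lemma kasselBracket_apply (u v : KasselSpace K G R) :
    kasselBracket K G R u v = (⁅u.1, v.1⁆, kasselCocycle K G R u.1 v.1) := rfl

lemma eq_kasselBracket_of_tmul
    {B : KasselSpace K G R →ₗ[K] KasselSpace K G R →ₗ[K] KasselSpace K G R}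
    (hB : ∀ (f g : R) (x y : G) (ω ω' : DifferentialsModExact K R), B (f ⊗ₜ x, ω) (g ⊗ₜ y, ω') =
      ((f * g) ⊗ₜ ⁅x, y⁆, killingForm K G x y • diffClass K R f g)) :
    B = kasselBracket K G R := by
  have agree_tmul (f g : R) (x y : G) (ω ω' : DifferentialsModExact K R) :
      B (f ⊗ₜ x, ω) (g ⊗ₜ y, ω') = kasselBracket K G R (f ⊗ₜ x, ω) (g ⊗ₜ y, ω') := by
    simp [hB, kasselBracket_apply, kasselCocycle_tmul]
  have agree_right (f : R) (x : G) (ω : DifferentialsModExact K R) :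
      B (f ⊗ₜ x, ω) = kasselBracket K G R (f ⊗ₜ x, ω) := by
    refine LinearMap.prod_ext (TensorProduct.ext' fun g y => agree_tmul f g x y ω 0) ?_
    refine LinearMap.ext fun ω' => ?_
    simpa using agree_tmul f 0 x 0 ω ω'
  refine LinearMap.prod_ext (TensorProduct.ext' fun f x => agree_right f x 0) ?_
  refine LinearMap.ext fun ω => ?_
  simpa using agree_right 0 0 ω

end CurrentAlgebra

section CocyclesOfCurrentAlgebra

variable {K G R V : Type*} [Field K] [LieRing G] [LieAlgebra K G] [CommRing R] [Algebra K R]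
  [AddCommGroup V] [Module K V]

lemma span_range_lie_kasselCocycle [FiniteDimensional K G]
    (hκ : (killingForm K G).Nondegenerate) (hG : ¬IsLieAbelian G) :
    Submodule.span K (Set.range fun p : (R ⊗[K] G) × (R ⊗[K] G) =>
      (⁅p.1, p.2⁆, kasselCocycle K G R p.1 p.2)) = ⊤ := by
  let S := Submodule.span K (Set.range fun p : (R ⊗[K] G) × (R ⊗[K] G) =>
    (⁅p.1, p.2⁆, kasselCocycle K G R p.1 p.2))
  have bracket_mem (u v : R ⊗[K] G) : (⁅u, v⁆, kasselCocycle K G R u v) ∈ S :=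
    Submodule.subset_span ⟨(u, v), rfl⟩
  have inl_tmul_lie_mem (f : R) (y z : G) :
      (f ⊗ₜ[K] ⁅y, z⁆, (0 : DifferentialsModExact K R)) ∈ S := by
    simpa [kasselCocycle_tmul, diffClass_one_left] using bracket_mem (1 ⊗ₜ y) (f ⊗ₜ z)
  have inl_mem (u : R ⊗[K] G) : (u, (0 : DifferentialsModExact K R)) ∈ S := by
    suffices h : ⊤ ≤ S.comap (LinearMap.inl K (R ⊗[K] G) (DifferentialsModExact K R)) from
      h (Submodule.mem_top (x := u))
    rw [← TensorProduct.span_tmul_eq_top, Submodule.span_le]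
    rintro _ ⟨f, x, rfl⟩
    let e := finBasis K G
    rw [← sum_lie_lie_dualBasis_killingForm hκ e x, TensorProduct.tmul_sum]
    exact Submodule.sum_mem _ fun i _ => inl_tmul_lie_mem f (e i) _
  have inr_mem (m : DifferentialsModExact K R) : ((0 : R ⊗[K] G), m) ∈ S := by
    suffices h : ⊤ ≤ S.comap (LinearMap.inr K (R ⊗[K] G) (DifferentialsModExact K R)) from
      h (Submodule.mem_top (x := m))
    obtain ⟨x, y, z, hxyz⟩ := exists_killingForm_lie_eq_one hκ hG
    rw [← span_range_diffClass, Submodule.span_le]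
    rintro _ ⟨⟨f, g⟩, rfl⟩
    simpa [kasselCocycle_tmul, hxyz] using
      S.sub_mem (bracket_mem (f ⊗ₜ x) (g ⊗ₜ ⁅y, z⁆)) (inl_mem ((f * g) ⊗ₜ ⁅x, ⁅y, z⁆⁆))
  refine Submodule.eq_top_iff'.2 fun ⟨u, m⟩ => ?_
  simpa using S.add_mem (inl_mem u) (inr_mem m)

lemma IsTwoCocycle.exists_apply_one_tmul_eq [FiniteDimensional K G]
    (hκ : (killingForm K G).Nondegenerate) {b : R ⊗[K] G →ₗ[K] R ⊗[K] G →ₗ[K] V}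
    (hb : IsTwoCocycle b) :
    ∃ h : R ⊗[K] G →ₗ[K] V, ∀ x v, b (1 ⊗ₜ x) v = h ⁅(1 : R) ⊗ₜ[K] x, v⁆ := by
  let b₁ : G →ₗ[K] G →ₗ[K] R →ₗ[K] V := LinearMap.mk₂ K
    (fun x y => b (1 ⊗ₜ x) ∘ₗ (TensorProduct.mk K R G).flip y)
    (by simp [TensorProduct.tmul_add, LinearMap.add_comp]) (by simp [LinearMap.smul_comp])
    (by simp [LinearMap.comp_add]) (by simp [LinearMap.comp_smul])
  obtain ⟨h, hh⟩ := exists_eq_comp_lie_of_leibniz hκ b₁ fun x y z => LinearMap.ext fun g => by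
    simpa [b₁] using hb.leibniz (1 ⊗ₜ x) (1 ⊗ₜ y) (g ⊗ₜ z)
  let h' : R ⊗[K] G →ₗ[K] V := TensorProduct.lift h.flip
  have agree (x : G) : b (1 ⊗ₜ x) = h' ∘ₗ LieAlgebra.ad K (R ⊗[K] G) (1 ⊗ₜ x) :=
    TensorProduct.ext' fun g y => by
      simpa [b₁, h'] using LinearMap.congr_fun (hh x y) g
  exact ⟨h', fun x v => LinearMap.congr_fun (agree x) v⟩

lemma IsTwoCocycle.exists_eq_killingForm_smul [IsAlgClosed K] [FiniteDimensional K G]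
    [LieAlgebra.IsSimple K G] (hκ : (killingForm K G).Nondegenerate)
    {b : R ⊗[K] G →ₗ[K] R ⊗[K] G →ₗ[K] V} (hb : IsTwoCocycle b)
    (hb₁ : ∀ x v, b (1 ⊗ₜ x) v = 0) :
    ∃ c : R →ₗ[K] R →ₗ[K] V, ∀ f g x y,
      b (f ⊗ₜ x) (g ⊗ₜ y) = killingForm K G x y • c f g := by
  let b' : G →ₗ[K] G →ₗ[K] R →ₗ[K] R →ₗ[K] V := LinearMap.mk₂ K
    (fun x y => b.compl₁₂ ((TensorProduct.mk K R G).flip x) ((TensorProduct.mk K R G).flip y))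
    (by intros; ext; simp) (by intros; ext; simp)
    (by intros; ext; simp) (by intros; ext; simp)
  obtain ⟨c, hc⟩ := exists_eq_killingForm_smul_of_lieInvariant hκ b' fun x y z =>
    LinearMap.ext₂ fun f g => by
      have h := hb.leibniz (1 ⊗ₜ x) (f ⊗ₜ y) (g ⊗ₜ z)
      simpa [b', hb₁, eq_neg_iff_add_eq_zero, eq_comm] using h
  exact ⟨c, fun f g x y => LinearMap.congr_fun₂ (hc x y) f g⟩

lemma IsTwoCocycle.exists_eq_comp_kasselCocycle [IsAlgClosed K] [FiniteDimensional K G]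
    [LieAlgebra.IsSimple K G] (hκ : (killingForm K G).Nondegenerate)
    {b : R ⊗[K] G →ₗ[K] R ⊗[K] G →ₗ[K] V} (hb : IsTwoCocycle b)
    (hb₁ : ∀ x v, b (1 ⊗ₜ x) v = 0) :
    ∃ C : DifferentialsModExact K R →ₗ[K] V, ∀ u v, b u v = C (kasselCocycle K G R u v) := by
  obtain ⟨c, hc⟩ := hb.exists_eq_killingForm_smul hκ hb₁
  obtain ⟨x, y, z, hxyz⟩ := exists_killingForm_lie_eq_one hκ (LieAlgebra.IsSimple.non_abelian K)
  have hxyz' : killingForm K G ⁅x, y⁆ z = 1 :=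
    (LieModule.traceForm_apply_lie_apply K G G x y z).trans hxyz
  have hyxz : killingForm K G y ⁅x, z⁆ = -1 := by
    rw [← hxyz', LieModule.traceForm_apply_lie_apply' K G G x, neg_neg]
  have c_one (g : R) : c 1 g = 0 := by
    simpa [hb₁, hxyz] using (hc 1 g x ⁅y, z⁆).symm
  have c_skew (f g : R) : -c f g = c g f := by
    have h := hb.neg_apply (f ⊗ₜ x) (g ⊗ₜ ⁅y, z⁆)
    rwa [hc, hc, LieModule.traceForm_comm K G G ⁅y, z⁆, hxyz, one_smul, one_smul] at h
  have c_leibniz (f g k : R) : c f (g * k) = c (f * g) k + c (f * k) g := by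
    have h := hb.leibniz (f ⊗ₜ x) (g ⊗ₜ y) (k ⊗ₜ z)
    simp only [LieAlgebra.ExtendScalars.bracket_tmul, hc, hxyz, hxyz', hyxz, neg_smul,
      one_smul, c_skew] at h
    exact h
  obtain ⟨C, hC⟩ := exists_comp_diffClass c c_one c_leibniz
  refine ⟨C, LinearMap.congr_fun₂ (g := (kasselCocycle K G R).compr₂ C) ?_⟩
  ext f x g y
  simp [kasselCocycle_tmul, hc, hC]

theorem IsTwoCocycle.exists_eq_lie_add_kasselCocycle [IsAlgClosed K] [FiniteDimensional K G]
    [LieAlgebra.IsSimple K G] (hκ : (killingForm K G).Nondegenerate)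
    {b : R ⊗[K] G →ₗ[K] R ⊗[K] G →ₗ[K] V} (hb : IsTwoCocycle b) :
    ∃ (h : R ⊗[K] G →ₗ[K] V) (C : DifferentialsModExact K R →ₗ[K] V),
      ∀ u v, b u v = h ⁅u, v⁆ + C (kasselCocycle K G R u v) := by
  obtain ⟨h, hh⟩ := hb.exists_apply_one_tmul_eq hκ
  obtain ⟨C, hC⟩ := (hb.sub_coboundary h).exists_eq_comp_kasselCocycle hκ
    fun x v => sub_eq_zero.2 (hh x v)
  exact ⟨h, C, fun u v => sub_eq_iff_eq_add'.1 (hC u v)⟩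

end CocyclesOfCurrentAlgebra

end Kassel

open Kassel in
theorem statement16_general {K G R : Type*} [Field K] [IsAlgClosed K] [LieRing G]
    [LieAlgebra K G] [FiniteDimensional K G] [LieAlgebra.IsSimple K G] [LieAlgebra.IsKilling K G]
    [CommRing R] [Algebra K R]
    (B : KasselSpace K G R →ₗ[K] KasselSpace K G R →ₗ[K] KasselSpace K G R)
    (hKassel : ∀ (f g : R) (x y : G) (ω ω' : DifferentialsModExact K R),
      B (f ⊗ₜ x, ω) (g ⊗ₜ y, ω') =
        ((f * g) ⊗ₜ ⁅x, y⁆, killingForm K G x y • diffClass K R f g)) :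
    Function.Surjective (LinearMap.fst K (R ⊗[K] G) (DifferentialsModExact K R)) ∧
      (∀ u v, (B u v).1 = ⁅u.1, v.1⁆) ∧
      (∀ v : KasselSpace K G R, v.1 = 0 → ∀ w, B v w = 0) ∧
      (∀ (E : Type*) [LieRing E] [LieAlgebra K E] (τ : E →ₗ[K] R ⊗[K] G),
        Function.Surjective τ →
        (∀ e e' : E, τ ⁅e, e'⁆ = ⁅τ e, τ e'⁆) →
        (∀ e : E, τ e = 0 → ∀ e' : E, ⁅e, e'⁆ = 0) →
        ∃! φ : KasselSpace K G R →ₗ[K] E,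
          (∀ u v, φ (B u v) = ⁅φ u, φ v⁆) ∧
            τ ∘ₗ φ = LinearMap.fst K (R ⊗[K] G) (DifferentialsModExact K R)) := by
  obtain rfl := eq_kasselBracket_of_tmul hKassel
  have hκ := LieAlgebra.IsKilling.killingForm_nondegenerate K G
  refine ⟨LinearMap.fst_surjective, fun u v => rfl, fun v hv w => ?_, ?_⟩
  · rw [kasselBracket_apply, hv, zero_lie, map_zero, LinearMap.zero_apply, Prod.mk_zero_zero]
  · intro E _ _ τ τ_surj τ_lie τ_central
    let τ' : E →ₗ⁅K⁆ R ⊗[K] G := { τ with map_lie' := τ_lie _ _ }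
    have ker_le : τ'.ker ≤ LieAlgebra.center K E := fun e he =>
      (LieModule.mem_maxTrivSubmodule K E E e).2 fun f => by
        rw [← lie_skew, τ_central e he, neg_zero]
    exact existsUnique_lift_of_forall_isTwoCocycle (ψ := kasselCocycle K G R) (τ := τ')
      (span_range_lie_kasselCocycle hκ (LieAlgebra.IsSimple.non_abelian K))
      (fun b hb => hb.exists_eq_lie_add_kasselCocycle hκ) τ_surj ker_le

/-- `ĝ = (𝔤 ⊗ R) ⊕ Ω¹_R/dR` with Kassel's bracket
`[x⊗f + ω, y⊗g + ω′] = [x,y]⊗fg + κ(x,y)·\overline{f dg}` is a universal central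
extension of the current algebra `𝔤 ⊗ R`: the projection `π` is a surjective Lie
algebra homomorphism whose kernel `Ω¹_R/dR` is contained in the center of `ĝ`, and for
every Lie algebra `E` over ℂ with a surjective homomorphism `τ : E → 𝔤 ⊗ R` whose kernel
is contained in the center of `E`, there is a unique Lie algebra homomorphism
`φ : ĝ → E` with `τ ∘ φ = π`. -/
theorem statement16 (hn : 1 ≤ n) (han : a n = 1) (ha0 : a 0 ≠ 0)
    (hsep : (pPoly n a).Separable)
    [FiniteDimensional ℂ 𝔤] [LieAlgebra.IsSimple ℂ 𝔤]
    -- Kassel's bracket on `ĝ`, which makes `ĝ` a Lie algebra over ℂ: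
    (B : HatG n a 𝔤 →ₗ[ℂ] HatG n a 𝔤 →ₗ[ℂ] HatG n a 𝔤)
    (hAlt : ∀ v, B v v = 0)
    (hJacobi : ∀ u v w, B u (B v w) = B (B u v) w + B v (B u w))
    (hKassel : ∀ (f g : HyperRing n a) (x y : 𝔤) (ω ω' : OmegaQ n a),
      B (f ⊗ₜ x, ω) (g ⊗ₜ y, ω') =
        ((f * g) ⊗ₜ ⁅x, y⁆, killingForm ℂ 𝔤 x y • fdg n a f g)) :
    -- `π` is a surjective Lie algebra homomorphism:
    Function.Surjective (projPi n a 𝔤) ∧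
      (∀ u v : HatG n a 𝔤, projPi n a 𝔤 (B u v) = ⁅projPi n a 𝔤 u, projPi n a 𝔤 v⁆) ∧
      -- the kernel `Ω¹_R/dR` of `π` is contained in the center of `ĝ`:
      (∀ v : HatG n a 𝔤, projPi n a 𝔤 v = 0 → ∀ w : HatG n a 𝔤, B v w = 0) ∧
      -- universal property:
      (∀ (E : Type) [LieRing E] [LieAlgebra ℂ E] (τ : E →ₗ[ℂ] CurrentAlg n a 𝔤),
        Function.Surjective τ →
        (∀ e e' : E, τ ⁅e, e'⁆ = ⁅τ e, τ e'⁆) →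
        (∀ e : E, τ e = 0 → ∀ e' : E, ⁅e, e'⁆ = 0) →
        ∃! φ : HatG n a 𝔤 →ₗ[ℂ] E,
          (∀ u v : HatG n a 𝔤, φ (B u v) = ⁅φ u, φ v⁆) ∧
            τ.comp φ = projPi n a 𝔤) := by
  exact statement16_general B hKassel
end
end
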